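/- For L1, L2 ∈ Gr(V,m) with m < dim V, the following equalities hold: dist(L1,L2) = max_{x∈L1, ‖x‖=1} min_{v∈L2} |||x−v||| = max{⟨u,x⟩ : x ∈ L1, u ∈ L2^⊥, ‖x‖ = 1, |||u|||* = 1} = max_{u∈L2^⊥, |||u|||*=1} min_{y∈L1^⊥} ‖u−y‖*. -/

import Mathlib

/-!
Each inner minimum is a distance to a subspace, and such a distance equals the maximum of a linear
functional over the unit sphere of the orthogonal complement, by Hahn-Banach.

* `exists_orthogonal_functional`: the distance `min_{v ∈ L} M (x - v)` is a seminorm in `x` that is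
  dominated by `M` and vanishes on `L`. Extending a functional that norms `x` for this seminorm
  gives `u ∈ Lᗮ` of dual norm one with `min_{v ∈ L} M (x - v) ≤ ⟪u, x⟫`; the reverse inequality
  is `inner_le_quotNorm`. Taking the supremum over `x` turns the second expression of the theorem
  into the bilinear one.
* `quotNorm_dualNorm_le`: if `⟪u, ·⟫ ≤ s N` on `L`, extending `⟪u, ·⟫` from `L` to `V` with the same
  bound gives `w` with `u - w ∈ Lᗮ` and dual norm at most `s`. So
  `min_{y ∈ Lᗮ} ‖u - y‖*` is the norm of `⟪u, ·⟫` restricted to `L`, which turns the bilinear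
  expression into the last one.

The dual norm is a supremum of reals, so it carries information only once the supremum is known to
be finite; this is the comparison of `N` with the Euclidean norm in `IsNorm.exists_norm_le`.
-/

open Module RealInnerProductSpace

/-- `N` is a norm on the real vector space `V`. -/
structure IsNorm (V : Type*) [AddCommGroup V] [Module ℝ V] (N : V → ℝ) : Prop where
  nonneg : ∀ x, 0 ≤ N x
  eq_zero_iff : ∀ x, N x = 0 ↔ x = 0
  smul_eq : ∀ (c : ℝ) (x : V), N (c • x) = |c| * N x
  add_le : ∀ x y, N (x + y) ≤ N x + N y

/-- `K` is a regular closed convex cone: closed, convex, a cone, pointed and solid. -/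
structure IsRegularCone (V : Type*) [NormedAddCommGroup V] [InnerProductSpace ℝ V]
    (K : Set V) : Prop where
  closed : IsClosed K
  convex : Convex ℝ K
  smul_mem : ∀ ⦃c : ℝ⦄, 0 < c → ∀ ⦃x⦄, x ∈ K → c • x ∈ K
  pointed : K ∩ (-K) = {0}
  solid : (interior K).Nonempty

variable {V : Type*} [NormedAddCommGroup V] [InnerProductSpace ℝ V]

/-- The dual norm of `N` with respect to the inner product of `V`. -/
noncomputable def dualNorm (N : V → ℝ) (u : V) : ℝ :=
  sSup {r : ℝ | ∃ x : V, N x = 1 ∧ r = ⟪u, x⟫}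

/-- The dual cone of `K`. -/
def dualCone (K : Set V) : Set V := {u : V | ∀ x ∈ K, 0 ≤ ⟪u, x⟫}

/-- `dist(L1,L2) = max_{x ∈ L1, x ≠ 0} min_{v ∈ L2} |||x - v||| / ‖x‖`,
with `‖·‖ = N` and `|||·||| = N'`. -/
noncomputable def grDist (N N' : V → ℝ) (L1 L2 : Submodule ℝ V) : ℝ :=
  sSup {d : ℝ | ∃ x ∈ L1, x ≠ 0 ∧ d = sInf {c : ℝ | ∃ v ∈ L2, c = N' (x - v) / N x}}

/-- `odist(L1,L2) = max_{x ∈ L1, x ≠ 0} inf_{v ∈ L2, v ≠ 0} |||x - v||| / ‖v‖`. -/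
noncomputable def grOdist (N N' : V → ℝ) (L1 L2 : Submodule ℝ V) : ℝ :=
  sSup {d : ℝ | ∃ x ∈ L1, x ≠ 0 ∧
    d = sInf {c : ℝ | ∃ v ∈ L2, v ≠ 0 ∧ c = N' (x - v) / N v}}

/-- The set `Σ_m` of ill-posed `m`-dimensional subspaces. -/
def SigmaIll (K : Set V) (m : ℕ) : Set (Submodule ℝ V) :=
  {L | finrank ℝ L = m ∧ (L : Set V) ∩ K ≠ {0} ∧ (Lᗮ : Set V) ∩ dualCone K ≠ {0}}

/-- `dist(L, Σ_m) = inf_{L' ∈ Σ_m} dist(L, L')`. -/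
noncomputable def distToIll (N N' : V → ℝ) (K : Set V) (m : ℕ) (L : Submodule ℝ V) : ℝ :=
  sInf {d : ℝ | ∃ L' ∈ SigmaIll K m, d = grDist N N' L L'}

/-- `odist(Σ_m, L) = inf_{L' ∈ Σ_m} odist(L', L)`. -/
noncomputable def odistToIll (N N' : V → ℝ) (K : Set V) (m : ℕ) (L : Submodule ℝ V) : ℝ :=
  sInf {d : ℝ | ∃ L' ∈ SigmaIll K m, d = grOdist N N' L' L}

/-- `ν(L) = min {‖y - u‖* : u ∈ K*, y ∈ L^⊥, |||u|||* = 1}`. -/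
noncomputable def nu (N N' : V → ℝ) (K : Set V) (L : Submodule ℝ V) : ℝ :=
  sInf {r : ℝ | ∃ u ∈ dualCone K, ∃ y ∈ Lᗮ, dualNorm N' u = 1 ∧ r = dualNorm N (y - u)}

/-- `ν̄(L) = min {|||v - x||| : v ∈ K, x ∈ L, ‖x‖ = 1}`. -/
noncomputable def nubar (N N' : V → ℝ) (K : Set V) (L : Submodule ℝ V) : ℝ :=
  sInf {r : ℝ | ∃ v ∈ K, ∃ x ∈ L, N x = 1 ∧ r = N' (v - x)}

/-- `λ_v(x) = sup {t : x - t v ∈ K}`. -/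
noncomputable def lambdaVec (K : Set V) (v x : V) : ℝ := sSup {t : ℝ | x - t • v ∈ K}

/-- `σ(L) = min_{v ∈ K, |||v||| = 1} max_{x ∈ L, ‖x‖ ≤ 1} λ_v(x)`. -/
noncomputable def sigmaMeas (N N' : V → ℝ) (K : Set V) (L : Submodule ℝ V) : ℝ :=
  sInf {r : ℝ | ∃ v ∈ K, N' v = 1 ∧
    r = sSup {c : ℝ | ∃ x ∈ L, N x ≤ 1 ∧ c = lambdaVec K v x}}

/-- `Sym(L) = min_{v ∈ K, ‖v‖ = 1} sup {t ≥ 0 : ∃ x ∈ K, ‖x‖ ≤ 1, x + t v ∈ L}`. -/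
noncomputable def symMeas (N : V → ℝ) (K : Set V) (L : Submodule ℝ V) : ℝ :=
  sInf {r : ℝ | ∃ v ∈ K, N v = 1 ∧
    r = sSup {t : ℝ | 0 ≤ t ∧ ∃ x ∈ K, N x ≤ 1 ∧ x + t • v ∈ L}}

/-- The norm `‖·‖_e` induced by the pair `(K, e)`. -/
noncomputable def inducedNorm (K : Set V) (e : V) (x : V) : ℝ :=
  sInf {α : ℝ | 0 ≤ α ∧ x + α • e ∈ K ∧ -x + α • e ∈ K}

/-! ### Norms given as functions -/

namespace IsNorm

variable {W : Type*} [AddCommGroup W] [Module ℝ W] {M : W → ℝ}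

theorem map_zero (h : IsNorm W M) : M 0 = 0 := (h.eq_zero_iff 0).2 rfl

theorem pos (h : IsNorm W M) {x : W} (hx : x ≠ 0) : 0 < M x :=
  lt_of_le_of_ne (h.nonneg x) fun e => hx ((h.eq_zero_iff x).1 e.symm)

theorem smul_pos_eq (h : IsNorm W M) {c : ℝ} (hc : 0 ≤ c) (x : W) : M (c • x) = c * M x := by
  rw [h.smul_eq, abs_of_nonneg hc]

theorem map_neg (h : IsNorm W M) (x : W) : M (-x) = M x := by
  simpa using h.smul_eq (-1) x

theorem map_normalize (h : IsNorm W M) {x : W} (hx : x ≠ 0) : M ((M x)⁻¹ • x) = 1 := by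
  rw [h.smul_pos_eq (inv_nonneg.2 (h.nonneg x)), inv_mul_cancel₀ (h.pos hx).ne']

end IsNorm

section

/-! ### Distance to a subspace -/

/-- The distance `min_{v ∈ L} M (x - v)` from `x` to `L`, i.e. the quotient seminorm of `M`
modulo `L`, written as an infimum. -/
noncomputable def quotNorm (M : V → ℝ) (L : Submodule ℝ V) (x : V) : ℝ :=
  sInf {c : ℝ | ∃ v ∈ L, c = M (x - v)}

section quotNorm

variable {M : V → ℝ} {L : Submodule ℝ V}

/-- Stated for an arbitrary nonnegative `M`, so that it also applies to `dualNorm N` with only its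
nonnegativity at hand. -/
theorem quotNorm_le (h : ∀ x, 0 ≤ M x) (x : V) {v : V} (hv : v ∈ L) :
    quotNorm M L x ≤ M (x - v) :=
  csInf_le ⟨0, by rintro _ ⟨w, -, rfl⟩; exact h _⟩ ⟨v, hv, rfl⟩

theorem le_quotNorm {x : V} {a : ℝ} (h : ∀ v ∈ L, a ≤ M (x - v)) : a ≤ quotNorm M L x :=
  le_csInf ⟨_, 0, L.zero_mem, rfl⟩ (by rintro _ ⟨v, hv, rfl⟩; exact h v hv)

theorem quotNorm_nonneg (h : ∀ x, 0 ≤ M x) (x : V) : 0 ≤ quotNorm M L x :=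
  le_quotNorm fun _ _ => h _

theorem quotNorm_le_self (h : ∀ x, 0 ≤ M x) (x : V) : quotNorm M L x ≤ M x := by
  simpa using quotNorm_le h x L.zero_mem

theorem quotNorm_eq_zero (h : IsNorm V M) {x : V} (hx : x ∈ L) : quotNorm M L x = 0 :=
  le_antisymm (by simpa [h.map_zero] using quotNorm_le h.nonneg x hx) (quotNorm_nonneg h.nonneg x)

theorem quotNorm_smul_le (h : IsNorm V M) {c : ℝ} (hc : 0 < c) (x : V) :
    quotNorm M L (c • x) ≤ c * quotNorm M L x := by
  rw [← div_le_iff₀' hc]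
  refine le_quotNorm fun v hv => ?_
  rw [div_le_iff₀' hc, ← h.smul_pos_eq hc.le, smul_sub]
  exact quotNorm_le h.nonneg _ (L.smul_mem c hv)

theorem quotNorm_smul (h : IsNorm V M) {c : ℝ} (hc : 0 < c) (x : V) :
    quotNorm M L (c • x) = c * quotNorm M L x := by
  refine le_antisymm (quotNorm_smul_le h hc x) ?_
  have := quotNorm_smul_le (L := L) h (inv_pos.2 hc) (c • x)
  rw [inv_smul_smul₀ hc.ne'] at this
  rwa [le_inv_mul_iff₀ hc] at this

theorem quotNorm_add_le (h : IsNorm V M) (x y : V) :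
    quotNorm M L (x + y) ≤ quotNorm M L x + quotNorm M L y := by
  rw [← sub_le_iff_le_add]
  refine le_quotNorm fun v hv => ?_
  rw [sub_le_comm]
  refine le_quotNorm fun w hw => ?_
  rw [sub_le_iff_le_add']
  refine (quotNorm_le h.nonneg _ (L.add_mem hv hw)).trans ?_
  rw [add_sub_add_comm]
  exact h.add_le _ _

end quotNorm

/-! ### The dual norm -/

variable {M : V → ℝ}

/-- A bound on the `M`-unit sphere of a subspace extends to the whole subspace by homogeneity. -/
theorem inner_le_mul_of_eq_one (h : IsNorm V M) {L : Submodule ℝ V} {u : V} {s : ℝ}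
    (hs : ∀ x ∈ L, M x = 1 → ⟪u, x⟫ ≤ s) {x : V} (hx : x ∈ L) : ⟪u, x⟫ ≤ s * M x := by
  rcases eq_or_ne x 0 with rfl | h0
  · simp [h.map_zero]
  have := hs _ (L.smul_mem (M x)⁻¹ hx) (h.map_normalize h0)
  rwa [inner_smul_right, inv_mul_le_iff₀ (h.pos h0), mul_comm] at this

theorem dualNorm_le {u : V} {s : ℝ} (hs : 0 ≤ s)
    (hu : ∀ x, ⟪u, x⟫ ≤ s * M x) : dualNorm M u ≤ s := by
  refine Real.sSup_le ?_ hs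
  rintro _ ⟨x, hx, rfl⟩
  simpa [hx] using hu x

variable [FiniteDimensional ℝ V]

theorem IsNorm.continuous (h : IsNorm V M) : Continuous M := by
  have : ConvexOn ℝ Set.univ M := by
    refine ⟨convex_univ, fun x _ y _ a b ha hb _ => ?_⟩
    refine (h.add_le _ _).trans ?_
    rw [h.smul_pos_eq ha, h.smul_pos_eq hb, smul_eq_mul, smul_eq_mul]
  exact this.locallyLipschitz.continuous

theorem IsNorm.exists_norm_le (h : IsNorm V M) : ∃ C : ℝ, 0 ≤ C ∧ ∀ x, ‖x‖ ≤ C * M x := by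
  have hne : ∀ x ∈ Metric.sphere (0 : V) 1, M x ≠ 0 := by
    intro x hx h0
    rw [(h.eq_zero_iff x).1 h0] at hx
    simp at hx
  obtain ⟨C, hC⟩ := (isCompact_sphere (0 : V) 1).exists_bound_of_continuousOn
    (h.continuous.continuousOn.inv₀ hne)
  refine ⟨max C 0, le_max_right _ _, fun x => ?_⟩
  rcases eq_or_ne x 0 with rfl | hx
  · simp [h.map_zero]
  have hp := h.pos hx
  have hn : 0 < ‖x‖ := norm_pos_iff.2 hx
  have h1 := hC (‖x‖⁻¹ • x) (by simp [norm_smul, hn.ne'])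
  rw [Pi.inv_apply, h.smul_pos_eq (inv_nonneg.2 hn.le), Real.norm_eq_abs, abs_of_nonneg (by positivity),
    mul_inv, inv_inv, ← div_eq_mul_inv, div_le_iff₀ hp] at h1
  exact h1.trans (mul_le_mul_of_nonneg_right (le_max_left _ _) hp.le)

theorem IsNorm.exists_le_norm (h : IsNorm V M) : ∃ C : ℝ, 0 ≤ C ∧ ∀ x, M x ≤ C * ‖x‖ := by
  obtain ⟨C, hC⟩ := (isCompact_sphere (0 : V) 1).exists_bound_of_continuousOn
    h.continuous.continuousOn
  refine ⟨max C 0, le_max_right _ _, fun x => ?_⟩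
  rcases eq_or_ne x 0 with rfl | hx
  · simp [h.map_zero]
  have hn : 0 < ‖x‖ := norm_pos_iff.2 hx
  have h1 := hC (‖x‖⁻¹ • x) (by simp [norm_smul, hn.ne'])
  rw [Real.norm_eq_abs, h.smul_pos_eq (inv_nonneg.2 hn.le)] at h1
  have h2 := (le_abs_self _).trans h1
  rw [inv_mul_le_iff₀ hn, mul_comm] at h2
  exact h2.trans (mul_le_mul_of_nonneg_right (le_max_left _ _) hn.le)

theorem inner_le_dualNorm_of_eq_one (h : IsNorm V M) (u : V) {x : V} (hx : M x = 1) :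
    ⟪u, x⟫ ≤ dualNorm M u := by
  obtain ⟨C, -, hC⟩ := h.exists_norm_le
  refine le_csSup ⟨‖u‖ * C, ?_⟩ ⟨x, hx, rfl⟩
  rintro _ ⟨y, hy, rfl⟩
  refine (real_inner_le_norm u y).trans (mul_le_mul_of_nonneg_left ?_ (norm_nonneg u))
  simpa [hy] using hC y

theorem dualNorm_nonneg (h : IsNorm V M) (u : V) : 0 ≤ dualNorm M u := by
  by_cases hx : ∃ x : V, M x = 1
  · obtain ⟨x, hx⟩ := hx
    have h1 := inner_le_dualNorm_of_eq_one h u hx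
    have h2 := inner_le_dualNorm_of_eq_one h u ((h.map_neg x).trans hx)
    rw [inner_neg_right] at h2
    linarith
  · exact Real.sSup_nonneg (by rintro _ ⟨x, h1, -⟩; exact absurd ⟨x, h1⟩ hx)

theorem inner_le_dualNorm_mul (h : IsNorm V M) (u x : V) : ⟪u, x⟫ ≤ dualNorm M u * M x :=
  inner_le_mul_of_eq_one h (L := ⊤) (fun _ _ hy => inner_le_dualNorm_of_eq_one h u hy) trivial

theorem dualNorm_pos (h : IsNorm V M) {u : V} (hu : u ≠ 0) : 0 < dualNorm M u := by
  have h1 := inner_le_dualNorm_mul h u u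
  have h2 : 0 < ⟪u, u⟫ := real_inner_self_pos.2 hu
  by_contra! h3
  nlinarith [h.nonneg u]

theorem dualNorm_smul_le (h : IsNorm V M) {c : ℝ} (hc : 0 ≤ c) (u : V) :
    dualNorm M (c • u) ≤ c * dualNorm M u := by
  refine dualNorm_le (mul_nonneg hc (dualNorm_nonneg h u)) fun x => ?_
  rw [real_inner_smul_left, mul_assoc]
  exact mul_le_mul_of_nonneg_left (inner_le_dualNorm_mul h u x) hc

theorem dualNorm_normalize (h : IsNorm V M) {u : V} (hu : u ≠ 0) :
    dualNorm M ((dualNorm M u)⁻¹ • u) = 1 := by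
  have hp := dualNorm_pos h hu
  refine le_antisymm ?_ ?_
  · simpa [hp.ne'] using dualNorm_smul_le h (inv_nonneg.2 hp.le) u
  · have := dualNorm_smul_le h hp.le ((dualNorm M u)⁻¹ • u)
    rw [smul_inv_smul₀ hp.ne'] at this
    nlinarith

/-! ### Duality for distances to subspaces -/

/-- Weak duality. -/
theorem inner_le_quotNorm (h : IsNorm V M) {L : Submodule ℝ V} {u : V} (hu : u ∈ Lᗮ)
    (h1 : dualNorm M u = 1) (x : V) : ⟪u, x⟫ ≤ quotNorm M L x := by
  refine le_quotNorm fun v hv => ?_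
  have := inner_le_dualNorm_mul h u (x - v)
  rwa [h1, one_mul, inner_sub_right, L.inner_left_of_mem_orthogonal hv hu, sub_zero] at this

/-- Hahn-Banach with the extended functional represented by a vector. -/
theorem exists_inner_le (f : V →ₗ.[ℝ] ℝ) (p : V → ℝ)
    (hp : ∀ c : ℝ, 0 < c → ∀ x, p (c • x) = c * p x) (hadd : ∀ x y, p (x + y) ≤ p x + p y)
    (hf : ∀ x : f.domain, f x ≤ p x) :
    ∃ w : V, (∀ x : f.domain, ⟪w, (x : V)⟫ = f x) ∧ ∀ x, ⟪w, x⟫ ≤ p x := by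
  obtain ⟨g, hg, hgp⟩ := exists_extension_of_le_sublinear f p hp hadd hf
  have key : ∀ x, ⟪(InnerProductSpace.toDual ℝ V).symm (LinearMap.toContinuousLinearMap g), x⟫
      = g x := fun x => by rw [InnerProductSpace.toDual_symm_apply]; rfl
  exact ⟨_, fun x => (key x).trans (hg x), fun x => (key x).trans_le (hgp x)⟩

/-- Strong duality. Properness of `L` is needed when `x ∈ L`: the norming functional may then be
zero, and a unit vector of `Lᗮ` has to be supplied instead. -/
theorem exists_orthogonal_functional (h : IsNorm V M) {L : Submodule ℝ V} (hL : L ≠ ⊤) (x : V) :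
    ∃ u ∈ Lᗮ, dualNorm M u = 1 ∧ quotNorm M L x ≤ ⟪u, x⟫ := by
  -- it is enough to find a nonzero functional of dual norm at most one; rescaling only helps
  suffices ∃ u ∈ Lᗮ, u ≠ 0 ∧ quotNorm M L x * dualNorm M u ≤ ⟪u, x⟫ by
    obtain ⟨u, hu, h0, hle⟩ := this
    refine ⟨(dualNorm M u)⁻¹ • u, Lᗮ.smul_mem _ hu, dualNorm_normalize h h0, ?_⟩
    rwa [real_inner_smul_left, le_inv_mul_iff₀' (dualNorm_pos h h0)]
  by_cases hx : x ∈ L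
  · obtain ⟨u, hu, h0⟩ := Submodule.exists_mem_ne_zero_of_ne_bot
      (mt Submodule.orthogonal_eq_bot_iff.1 hL)
    refine ⟨u, hu, h0, ?_⟩
    rw [quotNorm_eq_zero h hx, L.inner_left_of_mem_orthogonal hx hu, zero_mul]
  have hx0 : x ≠ 0 := fun e => hx (e ▸ L.zero_mem)
  have hq0 : ∀ y, 0 ≤ quotNorm M L y := quotNorm_nonneg h.nonneg
  obtain ⟨u, hux, hu⟩ := exists_inner_le (LinearPMap.mkSpanSingleton (σ := RingHom.id ℝ) x
    (quotNorm M L x) hx0) (quotNorm M L) (fun c hc y => quotNorm_smul h hc y)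
    (quotNorm_add_le h) (by
      rintro ⟨y, hy⟩
      obtain ⟨c, rfl⟩ := Submodule.mem_span_singleton.1 hy
      -- only the primed version of `mkSpanSingleton` has a lemma giving its value at every multiple
      erw [LinearPMap.mkSpanSingleton'_apply]
      simp only [RingHom.id_apply, smul_eq_mul]
      rcases lt_or_ge 0 c with hc | hc
      · exact (quotNorm_smul h hc x).ge
      · exact (mul_nonpos_of_nonpos_of_nonneg hc (hq0 x)).trans (hq0 _))
  have hux' : ⟪u, x⟫ = quotNorm M L x :=
    (hux ⟨x, Submodule.mem_span_singleton_self x⟩).trans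
      (LinearPMap.mkSpanSingleton_apply ℝ ℝ hx0 _)
  have hperp : u ∈ Lᗮ := by
    rw [Submodule.mem_orthogonal']
    intro v hv
    have h1 := hu v
    have h2 := hu (-v)
    rw [quotNorm_eq_zero h hv] at h1
    rw [quotNorm_eq_zero h (L.neg_mem hv), inner_neg_right] at h2
    linarith
  have hle : dualNorm M u ≤ 1 := dualNorm_le zero_le_one fun y => by
    rw [one_mul]; exact (hu y).trans (quotNorm_le_self h.nonneg y)
  by_cases h0 : u = 0
  · -- then `x` is at distance zero from `L`, and any vector of `Lᗮ` with the right sign serves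
    obtain ⟨w, hw, hw0⟩ := Submodule.exists_mem_ne_zero_of_ne_bot
      (mt Submodule.orthogonal_eq_bot_iff.1 hL)
    rw [h0, inner_zero_left] at hux'
    rcases le_total 0 ⟪w, x⟫ with hs | hs
    · exact ⟨w, hw, hw0, by simpa [← hux'] using hs⟩
    · exact ⟨-w, Lᗮ.neg_mem hw, neg_ne_zero.2 hw0, by simpa [← hux'] using hs⟩
  · exact ⟨u, hperp, h0, by rw [hux']; exact mul_le_of_le_one_right (hq0 x) hle⟩

/-- Weak duality for the dual norm. -/
theorem inner_le_quotNorm_dualNorm (h : IsNorm V M) {L : Submodule ℝ V} (u : V) {x : V}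
    (hx : x ∈ L) (h1 : M x = 1) : ⟪u, x⟫ ≤ quotNorm (dualNorm M) Lᗮ u := by
  refine le_quotNorm fun y hy => ?_
  have := inner_le_dualNorm_of_eq_one h (u - y) h1
  rwa [inner_sub_left, L.inner_left_of_mem_orthogonal hx hy, sub_zero] at this

/-- Strong duality for the dual norm: a bound for `⟪u, ·⟫` on the unit sphere of `L` also bounds the
dual norm of some `u - y` with `y ∈ Lᗮ`, namely of the Hahn-Banach extension of `⟪u, ·⟫` from `L`. -/
theorem quotNorm_dualNorm_le (h : IsNorm V M) {L : Submodule ℝ V} {u : V} {s : ℝ} (hs : 0 ≤ s)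
    (hu : ∀ x ∈ L, M x = 1 → ⟪u, x⟫ ≤ s) : quotNorm (dualNorm M) Lᗮ u ≤ s := by
  obtain ⟨w, hw, hle⟩ := exists_inner_le ⟨L, (innerₗ V u).domRestrict L⟩ (fun x => s * M x)
    (fun c hc x => by simp only [h.smul_pos_eq hc.le]; ring)
    (fun x y => by rw [← mul_add]; exact mul_le_mul_of_nonneg_left (h.add_le x y) hs)
    (fun x => inner_le_mul_of_eq_one h hu x.2)
  have hperp : u - w ∈ Lᗮ := by
    rw [Submodule.mem_orthogonal']
    intro x hx
    have : ⟪w, x⟫ = ⟪u, x⟫ := hw ⟨x, hx⟩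
    rw [inner_sub_left, this, sub_self]
  refine (quotNorm_le (dualNorm_nonneg h) u hperp).trans ?_
  rw [sub_sub_cancel]
  exact dualNorm_le hs hle

end


/-! ### The four expressions for the distance -/

/-- The three alternative expressions for `dist(L1, L2)`. -/
theorem stmt_3 {V : Type*} [NormedAddCommGroup V] [InnerProductSpace ℝ V]
    [FiniteDimensional ℝ V]
    (N N' : V → ℝ) (hN : IsNorm V N) (hN' : IsNorm V N')
    (m : ℕ) (hm : m < finrank ℝ V)
    (L1 L2 : Submodule ℝ V) (hL1 : finrank ℝ L1 = m) (hL2 : finrank ℝ L2 = m) :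
    grDist N N' L1 L2 =
      sSup {r : ℝ | ∃ x ∈ L1, N x = 1 ∧ r = sInf {c : ℝ | ∃ v ∈ L2, c = N' (x - v)}} ∧
    grDist N N' L1 L2 =
      sSup {r : ℝ | ∃ x ∈ L1, ∃ u ∈ L2ᗮ, N x = 1 ∧ dualNorm N' u = 1 ∧ r = ⟪u, x⟫} ∧
    grDist N N' L1 L2 =
      sSup {r : ℝ | ∃ u ∈ L2ᗮ, dualNorm N' u = 1 ∧
        r = sInf {c : ℝ | ∃ y ∈ L1ᗮ, c = dualNorm N (u - y)}} := by
  have hL2top : L2 ≠ ⊤ := by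
    rintro rfl
    rw [finrank_top] at hL2
    omega
  have hq0 : ∀ x, 0 ≤ quotNorm N' L2 x := quotNorm_nonneg hN'.nonneg
  -- a uniform bound on the `N`-unit sphere, making every supremum below finite
  obtain ⟨B, hB⟩ : ∃ B : ℝ, ∀ x, N x = 1 → quotNorm N' L2 x ≤ B := by
    obtain ⟨C, hC0, hC⟩ := hN'.exists_le_norm
    obtain ⟨D, -, hD⟩ := hN.exists_norm_le
    refine ⟨C * D, fun x hx => (quotNorm_le_self hN'.nonneg x).trans ((hC x).trans ?_)⟩
    exact mul_le_mul_of_nonneg_left (by simpa [hx] using hD x) hC0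
  set S2 : Set ℝ := {r | ∃ x ∈ L1, N x = 1 ∧ r = sInf {c : ℝ | ∃ v ∈ L2, c = N' (x - v)}} with hS2
  set S3 : Set ℝ :=
    {r | ∃ x ∈ L1, ∃ u ∈ L2ᗮ, N x = 1 ∧ dualNorm N' u = 1 ∧ r = ⟪u, x⟫} with hS3
  set S4 : Set ℝ := {r | ∃ u ∈ L2ᗮ, dualNorm N' u = 1 ∧
    r = sInf {c : ℝ | ∃ y ∈ L1ᗮ, c = dualNorm N (u - y)}} with hS4
  have e12 : grDist N N' L1 L2 = sSup S2 := by
    unfold grDist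
    congr 1
    ext d
    constructor
    · rintro ⟨x, hx, h0, rfl⟩
      have hp := hN.pos h0
      refine ⟨(N x)⁻¹ • x, L1.smul_mem _ hx, hN.map_normalize h0, ?_⟩
      congr 1
      ext c
      constructor
      · rintro ⟨v, hv, rfl⟩
        refine ⟨(N x)⁻¹ • v, L2.smul_mem _ hv, ?_⟩
        rw [← smul_sub, hN'.smul_pos_eq (inv_nonneg.2 hp.le), div_eq_inv_mul]
      · rintro ⟨v, hv, rfl⟩
        refine ⟨N x • v, L2.smul_mem _ hv, ?_⟩
        rw [div_eq_inv_mul, ← hN'.smul_pos_eq (inv_nonneg.2 hp.le), smul_sub,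
          inv_smul_smul₀ hp.ne']
    · rintro ⟨x, hx, h1, rfl⟩
      refine ⟨x, hx, ?_, by simp only [h1, div_one]⟩
      rintro rfl
      rw [hN.map_zero] at h1
      exact zero_ne_one h1
  have b2 : BddAbove S2 := ⟨B, by rintro _ ⟨x, -, h1, rfl⟩; exact hB x h1⟩
  have b3 : BddAbove S3 := by
    refine ⟨B, ?_⟩
    rintro _ ⟨x, -, u, hu, h1, hu1, rfl⟩
    exact (inner_le_quotNorm hN' hu hu1 x).trans (hB x h1)
  have key : ∀ x ∈ L1, N x = 1 → quotNorm N' L2 x ≤ sSup S3 := by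
    intro x hx h1
    obtain ⟨u, hu, hu1, hle⟩ := exists_orthogonal_functional hN' hL2top x
    exact hle.trans (le_csSup b3 ⟨x, hx, u, hu, h1, hu1, rfl⟩)
  -- when `L1 = 0` the sets `S2` and `S3` are empty, with supremum zero by convention
  have n3 : 0 ≤ sSup S3 := by
    by_cases he : ∃ x ∈ L1, N x = 1
    · obtain ⟨x, hx, h1⟩ := he
      exact (hq0 x).trans (key x hx h1)
    · exact Real.sSup_nonneg (by rintro _ ⟨x, hx, u, hu, h1, -⟩; exact absurd ⟨x, hx, h1⟩ he)
  have e23 : sSup S2 = sSup S3 := by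
    refine le_antisymm (Real.sSup_le ?_ n3) (Real.sSup_le ?_ (Real.sSup_nonneg ?_))
    · rintro _ ⟨x, hx, h1, rfl⟩
      exact key x hx h1
    · rintro _ ⟨x, hx, u, hu, h1, hu1, rfl⟩
      exact (inner_le_quotNorm hN' hu hu1 x).trans (le_csSup b2 ⟨x, hx, h1, rfl⟩)
    · rintro _ ⟨x, -, -, rfl⟩
      exact hq0 x
  have up4 : ∀ u ∈ L2ᗮ, dualNorm N' u = 1 → quotNorm (dualNorm N) L1ᗮ u ≤ sSup S3 :=
    fun u hu hu1 => quotNorm_dualNorm_le hN n3 fun x hx h1 =>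
      le_csSup b3 ⟨x, hx, u, hu, h1, hu1, rfl⟩
  have e34 : sSup S3 = sSup S4 := by
    refine le_antisymm (Real.sSup_le ?_ (Real.sSup_nonneg ?_)) (Real.sSup_le ?_ n3)
    · rintro _ ⟨x, hx, u, hu, h1, hu1, rfl⟩
      refine (inner_le_quotNorm_dualNorm hN u hx h1).trans (le_csSup ⟨sSup S3, ?_⟩ ⟨u, hu, hu1, rfl⟩)
      rintro _ ⟨w, hw, hw1, rfl⟩
      exact up4 w hw hw1
    · rintro _ ⟨u, -, -, rfl⟩
      exact quotNorm_nonneg (dualNorm_nonneg hN) u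
    · rintro _ ⟨u, hu, hu1, rfl⟩
      exact up4 u hu hu1
  exact ⟨e12, e12.trans e23, e12.trans (e23.trans e34)⟩
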